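/- The group PSL(2,7) has exactly two conjugacy classes of subgroups of index 7: there exist subgroups H₁ and H₂ of PSL(2,7) of index 7 that are not conjugate to each other, and every subgroup of PSL(2,7) of index 7 is conjugate either to H₁ or to H₂. -/

import Mathlib

/-- `SL(2, 𝔽_p)`: the group of 2×2 matrices of determinant 1 over `ℤ/pℤ`. -/
abbrev SL2 (p : ℕ) := Matrix.SpecialLinearGroup (Fin 2) (ZMod p)

/-- `PSL(2, 𝔽_p)`: the quotient of `SL(2, 𝔽_p)` by its center `{±I}`. -/
abbrev PSL2 (p : ℕ) := SL2 p ⧸ Subgroup.center (SL2 p)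

namespace Psl27

/-- Quadruples of residues modulo 7 (represented by natural numbers), encoding 2×2 matrices. -/
abbrev Quad := ℕ × ℕ × ℕ × ℕ

/-- `a * b + c * d` modulo 7. -/
def dot (a b c d : ℕ) : ℕ := Nat.mod (Nat.add (Nat.mul a b) (Nat.mul c d)) 7

/-- Negation modulo 7. -/
def ng (a : ℕ) : ℕ := Nat.mod (Nat.mul 6 a) 7

/-- Matrix multiplication. -/
def qmul : Quad → Quad → Quad
  | (a, b, c, d), (e, f, g, h) => (dot a e b g, dot a f b h, dot c e d g, dot c f d h)

/-- The adjugate. -/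
def qadj : Quad → Quad
  | (a, b, c, d) => (d, ng b, ng c, a)

/-- Is the determinant equal to one? -/
def qdet : Quad → Bool
  | (a, b, c, d) => Nat.beq (dot a d (ng b) c) 1

/-- Equality test. -/
def qeq : Quad → Quad → Bool
  | (a, b, c, d), (e, f, g, h) =>
    Nat.beq a e && (Nat.beq b f && (Nat.beq c g && Nat.beq d h))

lemma qeq_iff (x y : Quad) : qeq x y = true ↔ x = y := by
  obtain ⟨a, b, c, d⟩ := x
  obtain ⟨e, f, g, h⟩ := y
  simp [qeq, Prod.ext_iff]

/-- Conjugation. -/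
def qconj (g x : Quad) : Quad := qmul (qmul g x) (qadj g)

/-- Squaring. -/
def qsq (x : Quad) : Quad := qmul x x

/-- Forty-eighth power. -/
def qpow48 (x : Quad) : Quad := qsq (qsq (qsq (qsq (qmul (qsq x) x))))

/-- Does `g` normalize the list `L`? -/
def qtest (L : List Quad) (g : Quad) : Bool := L.all fun x => L.any fun y => qeq (qconj g x) y

lemma qtest_iff (L : List Quad) (g : Quad) : qtest L g = true ↔ ∀ x ∈ L, qconj g x ∈ L := by
  simp [qtest, qeq_iff]

/-- Elements of order four of a quaternion subgroup. -/
def L1 : List Quad := [(0, 6, 1, 0), (0, 1, 6, 0), (2, 3, 3, 5), (5, 4, 4, 2), (4, 2, 2, 3),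
  (3, 5, 5, 4)]

/-- Elements of order four of another quaternion subgroup. -/
def L2 : List Quad := [(0, 6, 1, 0), (0, 1, 6, 0), (2, 4, 4, 5), (5, 3, 3, 2), (3, 2, 2, 4),
  (4, 5, 5, 3)]

/-- A transversal of the center in the common Sylow 2-subgroup. -/
def PL : List Quad := [(0, 1, 6, 0), (1, 0, 0, 1), (2, 2, 5, 2), (2, 3, 3, 5), (2, 4, 4, 5),
  (2, 5, 2, 2), (3, 2, 2, 4), (3, 5, 5, 4)]

/-- The residues. -/
def res : List ℕ := [0, 1, 2, 3, 4, 5, 6]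

/-- Check a property of all elements of `SL(2,7)`. -/
def chk (f : Quad → Bool) : Bool :=
  res.all fun a => res.all fun b => res.all fun c => res.all fun d =>
    !(qdet (a, b, c, d)) || f (a, b, c, d)

/-- All entries are reduced. -/
def red (q : Quad) : Prop := q.1 < 7 ∧ q.2.1 < 7 ∧ q.2.2.1 < 7 ∧ q.2.2.2 < 7

lemma mem_res {a : ℕ} (h : a < 7) : a ∈ res := by
  simp only [res]; interval_cases a <;> simp

/-- The entries of a matrix. -/
def toQ (g : SL2 7) : Quad := ((g 0 0).val, (g 0 1).val, (g 1 0).val, (g 1 1).val)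

lemma toQ_red (g : SL2 7) : red (toQ g) :=
  ⟨ZMod.val_lt (g 0 0), ZMod.val_lt (g 0 1), ZMod.val_lt (g 1 0), ZMod.val_lt (g 1 1)⟩

lemma toQ_inj {g h : SL2 7} (e : toQ g = toQ h) : g = h := by
  simp only [toQ, Prod.mk.injEq, (ZMod.val_injective 7).eq_iff] at e
  ext i j
  fin_cases i <;> fin_cases j <;> simp [e]

lemma dot_val (a b c d : ZMod 7) : dot a.val b.val c.val d.val = (a * b + c * d).val := by
  rw [ZMod.val_add, ZMod.val_mul, ZMod.val_mul, ← Nat.add_mod]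
  rfl

lemma ng_val (a : ZMod 7) : ng a.val = (-a).val := by
  have : -a = 6 * a := by
    have h : (7 : ZMod 7) = 0 := rfl
    linear_combination -a * h
  rw [this, ZMod.val_mul]
  rfl

lemma toQ_mul (g h : SL2 7) : toQ (g * h) = qmul (toQ g) (toQ h) := by
  simp [toQ, qmul, dot_val, Matrix.mul_apply, Fin.sum_univ_two]

lemma toQ_one : toQ 1 = (1, 0, 0, 1) := by
  simp [toQ]
  rfl

lemma toQ_inv (g : SL2 7) : toQ g⁻¹ = qadj (toQ g) := by
  simp [toQ, qadj, ng_val, Matrix.SpecialLinearGroup.coe_inv, Matrix.adjugate_fin_two]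

lemma qdet_val (a b c d : ZMod 7) :
    qdet (a.val, b.val, c.val, d.val) = true ↔ a * d - b * c = 1 := by
  simp only [qdet, ng_val, dot_val]
  rw [Nat.beq_eq, show (1 : ℕ) = (1 : ZMod 7).val from rfl, (ZMod.val_injective 7).eq_iff,
    neg_mul, ← sub_eq_add_neg]

lemma toQ_det (g : SL2 7) : qdet (toQ g) = true := by
  have := g.2
  rw [Matrix.det_fin_two] at this
  exact (qdet_val _ _ _ _).2 this

lemma toQ_surj' (a b c d : ZMod 7) (h : qdet (a.val, b.val, c.val, d.val) = true) :
    ∃ g : SL2 7, g 0 0 = a ∧ g 0 1 = b ∧ g 1 0 = c ∧ g 1 1 = d :=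
  ⟨⟨!![a, b; c, d], by rw [Matrix.det_fin_two]; exact (qdet_val _ _ _ _).1 h⟩, by simp⟩

lemma toQ_surj (q : Quad) (hr : red q) (h : qdet q = true) : ∃ g : SL2 7, toQ g = q := by
  obtain ⟨a, b, c, d⟩ := q
  obtain ⟨ha, hb, hc, hd⟩ := hr
  have ha' := ZMod.val_cast_of_lt ha
  have hb' := ZMod.val_cast_of_lt hb
  have hc' := ZMod.val_cast_of_lt hc
  have hd' := ZMod.val_cast_of_lt hd
  simp only at ha' hb' hc' hd'
  obtain ⟨g, h1, h2, h3, h4⟩ := toQ_surj' (a : ZMod 7) (b : ZMod 7) (c : ZMod 7) (d : ZMod 7)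
    (by rw [ha', hb', hc', hd']; exact h)
  exact ⟨g, by simp only [toQ, h1, h2, h3, h4, ha', hb', hc', hd']⟩

lemma chk_spec {f : Quad → Bool} (h : chk f = true) (g : SL2 7) : f (toQ g) = true := by
  simp only [chk, List.all_eq_true] at h
  obtain ⟨ha, hb, hc, hd⟩ := toQ_red g
  have := h _ (mem_res ha) _ (mem_res hb) _ (mem_res hc) _ (mem_res hd)
  change (!(qdet (toQ g)) || f (toQ g)) = true at this
  simpa [toQ_det] using this

lemma toQ_conj (g x : SL2 7) : toQ (g * x * g⁻¹) = qconj (toQ g) (toQ x) := by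
  rw [toQ_mul, toQ_mul, toQ_inv, qconj]

lemma toQ_sq (g : SL2 7) : qsq (toQ g) = toQ (g ^ 2) := by
  rw [qsq, ← toQ_mul, pow_two]

lemma toQ_pow48 (g : SL2 7) : toQ (g ^ 48) = qpow48 (toQ g) := by
  rw [qpow48, toQ_sq, ← toQ_mul, toQ_sq, toQ_sq, toQ_sq, toQ_sq, ← pow_succ]
  simp only [← pow_mul]

lemma test_inv1 : chk (fun g => !(qtest L1 g) || qtest L1 (qadj g)) = true := by
  decide +kernel

lemma test_inv2 : chk (fun g => !(qtest L2 g) || qtest L2 (qadj g)) = true := by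
  decide +kernel

lemma key : chk (fun g => qtest L1 g || (qtest L2 g ||
    PL.any fun p => !(qeq (qpow48 (qmul p g)) (1, 0, 0, 1)))) = true := by
  decide +kernel

lemma PL_ok : ∀ p ∈ PL, red p ∧ qdet p = true ∧ qtest L1 p = true ∧ qtest L2 p = true := by
  unfold red
  decide +kernel

lemma P_pow : chk (fun g => !(qtest L1 g) || (!(qtest L2 g) ||
    qeq (qsq (qsq (qsq g))) (1, 0, 0, 1))) = true := by
  decide +kernel

lemma not_conj : chk (fun g => !(qtest L2 (qconj g (5, 2, 5, 5))) ||
    !(qtest L2 (qconj g (2, 0, 1, 4)))) = true := by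
  decide +kernel

lemma gens_ok : ∀ p ∈ [((5, 2, 5, 5) : Quad), (2, 0, 1, 4)],
    red p ∧ qdet p = true ∧ qtest L1 p = true := by
  unfold red
  decide +kernel

lemma L1_det : ∀ x ∈ L1, red x ∧ qdet x = true := by
  unfold red
  decide +kernel

lemma L2_det : ∀ x ∈ L2, red x ∧ qdet x = true := by
  unfold red
  decide +kernel

/-- Number of elements of `SL(2,7)` satisfying a test. -/
def cnt (f : Quad → Bool) : ℕ :=
  Fintype.card {q : Fin 7 × Fin 7 × Fin 7 × Fin 7 //
    (qdet (q.1.1, q.2.1.1, q.2.2.1.1, q.2.2.2.1) &&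
      f (q.1.1, q.2.1.1, q.2.2.1.1, q.2.2.2.1)) = true}

lemma card_all : cnt (fun _ => true) = 336 := by decide +kernel
lemma card_L1 : cnt (qtest L1) = 48 := by decide +kernel
lemma card_L2 : cnt (qtest L2) = 48 := by decide +kernel

lemma card_cnt (f : Quad → Bool) : Nat.card {g : SL2 7 // f (toQ g) = true} = cnt f := by
  rw [cnt, ← Nat.card_eq_fintype_card]
  refine Nat.card_congr (Equiv.ofBijective
    (fun g => ⟨(g.1 0 0, g.1 0 1, g.1 1 0, g.1 1 1), ?_⟩) ⟨?_, ?_⟩)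
  · exact Bool.and_eq_true_iff.2 ⟨toQ_det g.1, g.2⟩
  · intro g h e
    have e' := congrArg Subtype.val e
    apply Subtype.ext
    apply toQ_inj
    exact congrArg (fun q : Fin 7 × Fin 7 × Fin 7 × Fin 7 =>
      ((q.1.1, q.2.1.1, q.2.2.1.1, q.2.2.2.1) : Quad)) e'
  · rintro ⟨⟨a, b, c, d⟩, h⟩
    obtain ⟨h1, h2⟩ := Bool.and_eq_true_iff.1 h
    obtain ⟨g, rfl, rfl, rfl, rfl⟩ := toQ_surj' a b c d h1
    exact ⟨⟨g, h2⟩, rfl⟩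

lemma card_SL : Nat.card (SL2 7) = 336 := by
  rw [← card_all, ← card_cnt]
  exact Nat.card_congr (Equiv.subtypeUnivEquiv (fun _ => rfl)).symm

/-- The normalizer of `L` in `SL(2,7)`. -/
def nz (L : List Quad) (hL : ∀ x ∈ L, red x ∧ qdet x = true)
    (hi : chk (fun g => !(qtest L g) || qtest L (qadj g)) = true) :
    Subgroup (SL2 7) where
  carrier := {g | qtest L (toQ g) = true}
  mul_mem' := by
    intro g h hg hh
    simp only [Set.mem_ofPred_eq, qtest_iff] at hg hh ⊢
    intro x hx
    obtain ⟨y, rfl⟩ := toQ_surj x (hL x hx).1 (hL x hx).2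
    have := hg _ (hh _ hx)
    rw [← toQ_conj, ← toQ_conj] at this
    rw [← toQ_conj]
    convert this using 2
    group
  one_mem' := by
    simp only [Set.mem_ofPred_eq, qtest_iff]
    intro x hx
    obtain ⟨y, rfl⟩ := toQ_surj x (hL x hx).1 (hL x hx).2
    rw [← toQ_conj]
    simpa using hx
  inv_mem' := by
    intro g hg
    change qtest L (toQ g⁻¹) = true
    change qtest L (toQ g) = true at hg
    rw [toQ_inv]
    simpa [hg] using chk_spec hi g

lemma nz_card {L hL hi} : Nat.card (nz L hL hi) = cnt (qtest L) :=
  card_cnt (qtest L)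

lemma center_le {L hL hi} : Subgroup.center (SL2 7) ≤ nz L hL hi := by
  intro g hg
  refine (qtest_iff _ _).2 fun x hx => ?_
  obtain ⟨y, rfl⟩ := toQ_surj x (hL x hx).1 (hL x hx).2
  rw [← toQ_conj, ← Subgroup.mem_center_iff.1 hg y]
  simpa using hx

/-- First subgroup. -/
def N1 : Subgroup (SL2 7) := nz L1 L1_det test_inv1
/-- Second subgroup. -/
def N2 : Subgroup (SL2 7) := nz L2 L2_det test_inv2

/-- The projection. -/
abbrev pr : SL2 7 →* PSL2 7 := QuotientGroup.mk' (Subgroup.center (SL2 7))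

lemma pr_surj : Function.Surjective pr := QuotientGroup.mk'_surjective _

lemma card_of_index {K : Subgroup (SL2 7)} (h : K.index = 7) : Nat.card K = 48 := by
  have := K.card_mul_index
  rw [h, card_SL] at this
  omega

lemma index_of_card {K : Subgroup (SL2 7)} (h : Nat.card K = 48) : K.index = 7 := by
  have := K.card_mul_index
  rw [h, card_SL] at this
  omega

lemma N1_card : Nat.card N1 = 48 := nz_card.trans card_L1
lemma N2_card : Nat.card N2 = 48 := nz_card.trans card_L2

lemma map_index {N : Subgroup (SL2 7)} (hc : Subgroup.center (SL2 7) ≤ N) (h : Nat.card N = 48) :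
    (N.map pr).index = 7 := by
  rw [Subgroup.index_map_eq _ pr_surj (by rwa [QuotientGroup.ker_mk'])]
  exact index_of_card h

lemma eq_N (K : Subgroup (SL2 7)) (hK : Nat.card K = 48) (hP : N1 ⊓ N2 ≤ K) :
    K = N1 ∨ K = N2 := by
  have hsub : ∀ g ∈ K, g ∈ N1 ∨ g ∈ N2 := by
    intro g hg
    have hk := chk_spec key g
    simp only [Bool.or_eq_true, List.any_eq_true] at hk
    rcases hk with h | h | ⟨p, hp, h⟩
    · exact Or.inl h
    · exact Or.inr h
    · exfalso
      obtain ⟨hr, hd, h1, h2⟩ := PL_ok p hp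
      obtain ⟨p, rfl⟩ := toQ_surj p hr hd
      have hpK : p ∈ K := hP ⟨h1, h2⟩
      have hpow : (⟨p * g, K.mul_mem hpK hg⟩ : K) ^ Nat.card K = 1 := pow_card_eq_one'
      rw [hK] at hpow
      have hpow' : (p * g) ^ 48 = 1 := congrArg Subtype.val hpow
      rw [← toQ_mul, ← toQ_pow48, hpow', toQ_one] at h
      simp [qeq] at h
  have : K ≤ N1 ∨ K ≤ N2 := by
    by_contra! hcon
    obtain ⟨h1, h2⟩ := hcon
    obtain ⟨a, ha, ha1⟩ := SetLike.not_le_iff_exists.1 h1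
    obtain ⟨b, hb, hb2⟩ := SetLike.not_le_iff_exists.1 h2
    have ha2 := (hsub a ha).resolve_left ha1
    have hb1 := (hsub b hb).resolve_right hb2
    rcases hsub _ (K.mul_mem ha hb) with h | h
    · exact ha1 ((N1.mul_mem_cancel_right hb1).1 h)
    · exact hb2 ((N2.mul_mem_cancel_left ha2).1 h)
  refine this.imp (fun h => ?_) (fun h => ?_)
  · exact Subgroup.eq_of_le_of_card_ge h (by rw [hK, N1_card])
  · exact Subgroup.eq_of_le_of_card_ge h (by rw [hK, N2_card])

lemma isPGroup : IsPGroup 2 (N1 ⊓ N2 : Subgroup (SL2 7)) := by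
  rintro ⟨g, h1, h2⟩
  refine ⟨3, Subtype.ext ?_⟩
  change g ^ (2 ^ 3) = 1
  apply toQ_inj
  have h1' : qtest L1 (toQ g) = true := h1
  have h2' : qtest L2 (toQ g) = true := h2
  have := chk_spec P_pow g
  simp only [h1', h2', toQ_sq, ← pow_mul, Bool.not_true, Bool.false_or, qeq_iff] at this
  rw [toQ_one, ← this]
  rfl

lemma exists_conj (K : Subgroup (SL2 7)) (hK : K.index = 7) :
    ∃ g : SL2 7, N1 ⊓ N2 ≤ K.map (MulAut.conj g).toMonoidHom := by
  have hc : Nat.card (SL2 7 ⧸ K) = 7 := hK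
  obtain ⟨x, hx⟩ := isPGroup.nonempty_fixed_point_of_prime_not_dvd_card (SL2 7 ⧸ K)
    (by rw [hc]; norm_num)
  obtain ⟨g, rfl⟩ := QuotientGroup.mk_surjective x
  refine ⟨g, fun p hp => ?_⟩
  have h := hx ⟨p, hp⟩
  have h' : ((p * g : SL2 7) : SL2 7 ⧸ K) = g := h
  have h'' := QuotientGroup.eq.1 h'.symm
  exact ⟨_, h'', by simp [MulAut.conj_apply, mul_assoc]⟩

lemma map_conj_pr (g : SL2 7) (K : Subgroup (SL2 7)) :
    (K.map pr).map (MulAut.conj (pr g)).toMonoidHom =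
      (K.map (MulAut.conj g).toMonoidHom).map pr := by
  rw [Subgroup.map_map, Subgroup.map_map]
  congr 1

lemma main_conj (K : Subgroup (PSL2 7)) (hK : K.index = 7) :
    ∃ g : PSL2 7, K.map (MulAut.conj g).toMonoidHom = N1.map pr ∨
      K.map (MulAut.conj g).toMonoidHom = N2.map pr := by
  have hK' : (K.comap pr).index = 7 := by
    rw [Subgroup.index_comap_of_surjective _ pr_surj, hK]
  obtain ⟨g, hg⟩ := exists_conj _ hK'
  have hcard : Nat.card ((K.comap pr).map (MulAut.conj g).toMonoidHom) = 48 := by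
    rw [Subgroup.card_map_of_injective (MulAut.conj g).injective]
    exact card_of_index hK'
  have h := map_conj_pr g (K.comap pr)
  rw [Subgroup.map_comap_eq_self_of_surjective pr_surj] at h
  refine ⟨pr g, ?_⟩
  rw [h]
  exact (eq_N _ hcard hg).imp (fun h => by rw [h]) (fun h => by rw [h])

lemma main_not (g : PSL2 7) : (N1.map pr).map (MulAut.conj g).toMonoidHom ≠ N2.map pr := by
  obtain ⟨g, rfl⟩ := pr_surj g
  intro h
  have hx : ∃ x ∈ [((5, 2, 5, 5) : Quad), (2, 0, 1, 4)], ¬ qtest L2 (qconj (toQ g) x) = true := by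
    simpa using chk_spec not_conj g
  obtain ⟨x, hx, h2⟩ := hx
  obtain ⟨hr, hd, h1⟩ := gens_ok x hx
  obtain ⟨x, rfl⟩ := toQ_surj x hr hd
  rw [map_conj_pr] at h
  have hm : pr (g * x * g⁻¹) ∈ N2.map pr := by
    rw [← h]
    exact ⟨_, ⟨x, h1, rfl⟩, rfl⟩
  have hm' : g * x * g⁻¹ ∈ (N2.map pr).comap pr := hm
  rw [Subgroup.comap_map_eq_self (by rw [QuotientGroup.ker_mk']; exact center_le)] at hm'
  apply h2
  rw [← toQ_conj]
  exact hm'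

end Psl27


/-- `PSL(2,7)` has exactly two conjugacy classes of subgroups of index 7:
there are index-7 subgroups `H₁`, `H₂` that are not conjugate, and every index-7
subgroup is conjugate to `H₁` or to `H₂`. -/
theorem stmt_5 :
    ∃ H₁ H₂ : Subgroup (PSL2 7),
      H₁.index = 7 ∧ H₂.index = 7 ∧
      (¬ ∃ g : PSL2 7, Subgroup.map (MulAut.conj g).toMonoidHom H₁ = H₂) ∧
      ∀ K : Subgroup (PSL2 7), K.index = 7 →
        (∃ g : PSL2 7, Subgroup.map (MulAut.conj g).toMonoidHom K = H₁) ∨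
        (∃ g : PSL2 7, Subgroup.map (MulAut.conj g).toMonoidHom K = H₂) := by
  refine ⟨Psl27.N1.map Psl27.pr, Psl27.N2.map Psl27.pr,
    Psl27.map_index Psl27.center_le Psl27.N1_card,
    Psl27.map_index Psl27.center_le Psl27.N2_card, ?_, ?_⟩
  · rintro ⟨g, hg⟩
    exact Psl27.main_not g hg
  · intro K hK
    obtain ⟨g, h | h⟩ := Psl27.main_conj K hK
    · exact Or.inl ⟨g, h⟩
    · exact Or.inr ⟨g, h⟩
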